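/- arXiv:0709.4352 — 4 statements merged into one kernel-verified Lean document; each statement's English description precedes it below -/
import Mathlib

section
/- Let n ≥ 2 and let A be a real symmetric n×n matrix. If H_2 > 0, then H_1² ≥ H_2 > 0 (in particular H_1 ≠ 0); and if moreover H_1 > 0, then the first Newton transformation P_1 = n·H_1·I + A is positive definite, i.e. all of its eigenvalues μ_{i,1} = n·H_1 + κ_i are positive. -/
/-- The `k`-th elementary symmetric function of `κ₁, …, κₙ`:
`S_k = σ_k(κ₁,…,κₙ) = ∑_{i₁<⋯<i_k} κ_{i₁}⋯κ_{i_k}` (with `S_0 = 1`). -/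
noncomputable def Ssym (n : ℕ) (κ : Fin n → ℝ) (k : ℕ) : ℝ :=
  ∑ t ∈ (Finset.univ : Finset (Fin n)).powersetCard k, ∏ i ∈ t, κ i

/-- The `k`-th mean curvature `H_k`, defined by `binom(n,k)·H_k = (−1)^k·S_k`
(so `H_k = 0` for `k > n`, since then `S_k = 0`). -/
noncomputable def Hmc (n : ℕ) (κ : Fin n → ℝ) (k : ℕ) : ℝ :=
  (-1 : ℝ) ^ k * Ssym n κ k / (n.choose k : ℝ)

/-!
By Newton's identity `p₁² = p₂ + 2 e₂` for the power sums and the second elementary symmetric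
function, `(n H₁)² = ∑ κᵢ² + 2 binom(n,2) H₂`. Bounding `∑ κᵢ²` below by the Cauchy–Schwarz
inequality gives `H₂ ≤ H₁²`. Bounding it below by a single term gives `|κᵢ| < |n H₁|` as soon as
`H₂ > 0`, so that the spectrum of `A` stays positive when shifted by `n H₁ > 0`.
-/

section Newton

variable {R : Type*} [CommSemiring R]

theorem multiset_esymm_cons_succ (a : R) (s : Multiset R) (k : ℕ) :
    (a ::ₘ s).esymm (k + 1) = s.esymm (k + 1) + a * s.esymm k := by
  simp only [Multiset.esymm, Multiset.powersetCard_cons, Multiset.map_add, Multiset.sum_add,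
    Multiset.map_map, Function.comp_def, Multiset.prod_cons, Multiset.sum_map_mul_left]

theorem multiset_esymm_one (s : Multiset R) : s.esymm 1 = s.sum := by
  simp [Multiset.esymm, Multiset.powersetCard_one]

theorem multiset_sq_sum_eq_sum_sq_add_esymm_two (s : Multiset R) :
    s.sum ^ 2 = (s.map (· ^ 2)).sum + 2 * s.esymm 2 := by
  induction s using Multiset.induction_on with
  | empty => simp [Multiset.esymm, Multiset.powersetCard_zero_right]
  | cons a s ih =>
    rw [multiset_esymm_cons_succ, multiset_esymm_one, Multiset.sum_cons, Multiset.map_cons,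
      Multiset.sum_cons, add_sq, ih]
    ring

theorem finset_sq_sum_eq_sum_sq_add_powersetCard_two {ι : Type*} (s : Finset ι) (f : ι → R) :
    (∑ i ∈ s, f i) ^ 2 = ∑ i ∈ s, f i ^ 2 + 2 * ∑ t ∈ s.powersetCard 2, ∏ i ∈ t, f i := by
  have newton := multiset_sq_sum_eq_sum_sq_add_esymm_two (s.val.map f)
  rwa [Finset.esymm_map_val, Multiset.map_map] at newton

end Newton

section MeanCurvatures

variable {n : ℕ} (κ : Fin n → ℝ)

theorem Ssym_eq_zero_of_lt {k : ℕ} (hk : n < k) : Ssym n κ k = 0 := by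
  rw [Ssym, Finset.powersetCard_eq_empty.2 (by simpa using hk), Finset.sum_empty]

theorem choose_mul_Hmc (k : ℕ) : (n.choose k : ℝ) * Hmc n κ k = (-1) ^ k * Ssym n κ k := by
  obtain hk | hk := le_or_gt k n
  · exact mul_div_cancel₀ _ (Nat.cast_ne_zero.2 (Nat.choose_pos hk).ne')
  · simp [Nat.choose_eq_zero_of_lt hk, Ssym_eq_zero_of_lt κ hk]

theorem nat_mul_Hmc_one : (n : ℝ) * Hmc n κ 1 = -∑ i, κ i := by
  simpa [Ssym, Finset.powersetCard_one] using choose_mul_Hmc κ 1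

theorem sq_nat_mul_Hmc_one :
    ((n : ℝ) * Hmc n κ 1) ^ 2 = ∑ i, κ i ^ 2 + 2 * (n.choose 2 * Hmc n κ 2) := by
  rw [nat_mul_Hmc_one, neg_sq, finset_sq_sum_eq_sum_sq_add_powersetCard_two, choose_mul_Hmc,
    neg_one_sq, one_mul, Ssym]

theorem Hmc_two_le_sq_Hmc_one : Hmc n κ 2 ≤ Hmc n κ 1 ^ 2 := by
  obtain hn | hn := lt_or_ge n 2
  · simp [Hmc, Nat.choose_eq_zero_of_lt hn, sq_nonneg]
  have hn' : (2 : ℝ) ≤ n := mod_cast hn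
  have cauchy_schwarz : ((n : ℝ) * Hmc n κ 1) ^ 2 ≤ n * ∑ i, κ i ^ 2 := by
    simpa [nat_mul_Hmc_one] using sq_sum_le_card_mul_sum_sq (s := Finset.univ) (f := κ)
  have newton := sq_nat_mul_Hmc_one κ
  rw [Nat.cast_choose_two] at newton
  have scaled : ((n : ℝ) ^ 2 * (n - 1)) * Hmc n κ 2 ≤ (n ^ 2 * (n - 1)) * Hmc n κ 1 ^ 2 := by
    linear_combination cauchy_schwarz - n * newton
  exact le_of_mul_le_mul_left scaled (by nlinarith)

theorem Hmc_one_ne_zero_of_Hmc_two_pos (h2 : 0 < Hmc n κ 2) : Hmc n κ 1 ≠ 0 :=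
  sq_pos_iff.1 (h2.trans_le (Hmc_two_le_sq_Hmc_one κ))

theorem abs_lt_abs_nat_mul_Hmc_one (hn : 2 ≤ n) (h2 : 0 < Hmc n κ 2) (i : Fin n) :
    |κ i| < |(n : ℝ) * Hmc n κ 1| := by
  have choose_pos : (0 : ℝ) < n.choose 2 := mod_cast Nat.choose_pos hn
  refine sq_lt_sq.1 ?_
  calc κ i ^ 2 ≤ ∑ j, κ j ^ 2 :=
        Finset.single_le_sum (fun j _ ↦ sq_nonneg (κ j)) (Finset.mem_univ i)
    _ < ∑ j, κ j ^ 2 + 2 * (n.choose 2 * Hmc n κ 2) := lt_add_of_pos_right _ (by positivity)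
    _ = ((n : ℝ) * Hmc n κ 1) ^ 2 := (sq_nat_mul_Hmc_one κ).symm

theorem nat_mul_Hmc_one_add_pos (hn : 2 ≤ n) (h2 : 0 < Hmc n κ 2) (h1 : 0 < Hmc n κ 1)
    (i : Fin n) : 0 < (n : ℝ) * Hmc n κ 1 + κ i := by
  have abs_lt_shift := abs_lt_abs_nat_mul_Hmc_one κ hn h2 i
  rw [abs_of_nonneg (by positivity : 0 ≤ (n : ℝ) * Hmc n κ 1)] at abs_lt_shift
  exact neg_lt_iff_pos_add'.1 (abs_lt.1 abs_lt_shift).1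

end MeanCurvatures

section Spectrum

variable {m : Type*} [Fintype m] [DecidableEq m]

theorem spectrum_eq_range_of_charpoly_eq_prod {K ι : Type*} [Field K] [Fintype ι]
    {A : Matrix m m K} {κ : ι → K}
    (hchar : A.charpoly = ∏ i, (Polynomial.X - Polynomial.C (κ i))) :
    spectrum K A = Set.range κ := by
  ext x
  simp [Matrix.mem_spectrum_iff_isRoot_charpoly, hchar, Polynomial.eval_prod,
    Finset.prod_eq_zero_iff, sub_eq_zero, eq_comm (a := x)]

open scoped ComplexOrder

variable {𝕜 : Type*} [RCLike 𝕜] {A : Matrix m m 𝕜}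

theorem posDef_iff_forall_spectrum_pos (hA : A.IsHermitian) :
    A.PosDef ↔ ∀ x ∈ spectrum ℝ A, 0 < x := by
  rw [hA.posDef_iff_eigenvalues_pos, hA.spectrum_real_eq_range_eigenvalues, Set.forall_mem_range]

theorem posDef_smul_one_add_iff (hA : A.IsHermitian) (c : ℝ) :
    (c • (1 : Matrix m m 𝕜) + A).PosDef ↔ ∀ x ∈ spectrum ℝ A, 0 < c + x := by
  have shift_isHermitian : (c • (1 : Matrix m m 𝕜) + A).IsHermitian :=
    (Matrix.isHermitian_one.smul (IsSelfAdjoint.all c)).add hA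
  rw [posDef_iff_forall_spectrum_pos shift_isHermitian, ← Algebra.algebraMap_eq_smul_one,
    ← spectrum.singleton_add_eq, Set.singleton_add, Set.forall_mem_image]

end Spectrum

/-- Let `n ≥ 2` and let `A` be a real symmetric `n×n` matrix with eigenvalues `κ₁,…,κₙ`
listed with multiplicity. If `H_2 > 0`, then `H_1² ≥ H_2 > 0` (in particular `H_1 ≠ 0`),
and if moreover `H_1 > 0`, then the first Newton transformation `P_1 = n·H_1·I + A`
is positive definite, i.e. all of its eigenvalues `μ_{i,1} = n·H_1 + κ_i` are positive. -/
theorem stmt0 {n : ℕ} (hn : 2 ≤ n) (A : Matrix (Fin n) (Fin n) ℝ) (hA : A.IsSymm)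
    (κ : Fin n → ℝ)
    (hchar : A.charpoly = ∏ i, (Polynomial.X - Polynomial.C (κ i)))
    (h2 : 0 < Hmc n κ 2) :
    Hmc n κ 2 ≤ (Hmc n κ 1) ^ 2 ∧ Hmc n κ 1 ≠ 0 ∧
      (0 < Hmc n κ 1 →
        (∀ i : Fin n, 0 < (n : ℝ) * Hmc n κ 1 + κ i) ∧
        Matrix.PosDef
          (((n : ℝ) * Hmc n κ 1) • (1 : Matrix (Fin n) (Fin n) ℝ) + A)) := by
  refine ⟨Hmc_two_le_sq_Hmc_one κ, Hmc_one_ne_zero_of_Hmc_two_pos κ h2, fun h1 ↦ ?_⟩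
  have shift_pos := nat_mul_Hmc_one_add_pos κ hn h2 h1
  have hA' : A.IsHermitian := Matrix.isHermitian_iff_isSymm.2 hA
  refine ⟨shift_pos, (posDef_smul_one_add_iff hA' _).2 ?_⟩
  rwa [spectrum_eq_range_of_charpoly_eq_prod hchar, Set.forall_mem_range]
end

section
/- Let Σ be a connected topological space, let n ≥ 3 and 2 ≤ k ≤ n−1, and let y : Σ → ℝⁿ be a continuous map such that σ_{k+1}(y(p)) > 0 for every p ∈ Σ and such that there exists a point p₀ ∈ Σ with all coordinates y_i(p₀) > 0 (i = 1,…,n). Then for every p ∈ Σ, every 1 ≤ j ≤ k, and every 1 ≤ i ≤ n, the j-th elementary symmetric polynomial of the (n−1)-tuple (y_l(p))_{l ≠ i} is positive; in particular σ_j(y(p)) > 0 for all 1 ≤ j ≤ k and all p ∈ Σ. -/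
/-- The `j`-th elementary symmetric polynomial of the values `y i` for `i` in the
finite index set `s`: `σ_j((y_i)_{i ∈ s}) = ∑_{i₁<⋯<i_j ∈ s} y_{i₁}⋯y_{i_j}`. -/
noncomputable def esymmOn {n : ℕ} (s : Finset (Fin n)) (j : ℕ) (y : Fin n → ℝ) : ℝ :=
  ∑ t ∈ s.powersetCard j, ∏ i ∈ t, y i

/-!
Elementary symmetric polynomials of real numbers are the coefficients of a real-rooted polynomial,
so by Newton `σ_j σ_{j+2} ≤ σ_{j+1}²`. Let `Γ_m` be the Gårding cone `σ_1, …, σ_m > 0`.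

* On `Γ_m`, log-concavity and `σ_0 = 1` give the weak Maclaurin inequalities
  `σ_{j+1}^j ≤ σ_j^{j+1}`. These survive on the closure of `Γ_m`, where they force `σ_j > 0` as soon
  as `σ_{j+1} > 0`. So `Γ_m` is open and closed in `{σ_m > 0}`, and a connected subset of
  `{σ_m > 0}` that meets `Γ_m` stays in it.
* Let `τ_j` be the elementary symmetric polynomials of the variables other than `y_i`, so that
  `σ_{j+1} = τ_{j+1} + y_i τ_j`. If `τ_j > 0 ≥ τ_{j+1}` and `σ_{j+1}, σ_{j+2} > 0`, then
  `τ_j τ_{j+2} > -y_i τ_j τ_{j+1} ≥ τ_{j+1}²`, against log-concavity. Hence `Γ_{k+1}` in all the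
  variables lies in `Γ_k` of the variables other than `y_i`.
-/

section LogConcave

variable {R : Type*} [CommRing R] [LinearOrder R] [IsStrictOrderedRing R] {a : ℕ → R} {m : ℕ}

theorem pow_le_pow_succ_of_logConcave (h0 : 1 ≤ a 0) (hlc : ∀ j, a j * a (j + 2) ≤ a (j + 1) ^ 2)
    (hpos : ∀ j ≤ m, 0 < a j) : ∀ j < m, a (j + 1) ^ j ≤ a j ^ (j + 1) := by
  intro j hj
  induction j with
  | zero => simpa using h0
  | succ j ih =>
    have hj0 : 0 < a j := hpos j (by omega)
    have hj1 : 0 < a (j + 1) := hpos (j + 1) (by omega)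
    have hj2 : 0 < a (j + 2) := hpos (j + 2) (by omega)
    refine le_of_mul_le_mul_left ?_ (pow_pos hj0 (j + 1))
    calc a j ^ (j + 1) * a (j + 2) ^ (j + 1) = (a j * a (j + 2)) ^ (j + 1) := (mul_pow ..).symm
      _ ≤ (a (j + 1) ^ 2) ^ (j + 1) := by gcongr; exact hlc j
      _ = a (j + 1) ^ j * a (j + 1) ^ (j + 2) := by ring
      _ ≤ a j ^ (j + 1) * a (j + 1) ^ (j + 2) := by gcongr; exact ih (by omega)

theorem forall_pos_of_pow_le_pow_succ (hm : 0 < a m) (hnonneg : ∀ j ≤ m, 0 ≤ a j)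
    (hpow : ∀ j < m, a (j + 1) ^ j ≤ a j ^ (j + 1)) : ∀ j ≤ m, 0 < a j := by
  intro j hj
  induction hj using Nat.decreasingInduction with
  | self => exact hm
  | of_succ j hj ih =>
    have hpow_pos : 0 < a j ^ (j + 1) := (pow_pos ih j).trans_le (hpow j hj)
    exact (hnonneg j hj.le).lt_of_ne' (ne_zero_pow j.succ_ne_zero hpow_pos.ne')

theorem forall_pos_of_logConcave_of_add_mul_pos {c : R} (h0 : 0 < a 0)
    (hlc : ∀ j, a j * a (j + 2) ≤ a (j + 1) ^ 2) (hadd : ∀ j ≤ m, 0 < a (j + 1) + c * a j) :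
    ∀ j ≤ m, 0 < a j := by
  intro j hj
  induction j with
  | zero => exact h0
  | succ j ih =>
    have hj0 : 0 < a j := ih (by omega)
    by_contra! hj1
    refine (hlc j).not_gt ?_
    calc a (j + 1) ^ 2 = -a (j + 1) * -a (j + 1) := by ring
      _ ≤ c * a j * -a (j + 1) := by
        gcongr
        · exact neg_nonneg.2 hj1
        · linarith [hadd j (by omega)]
      _ = a j * -(c * a (j + 1)) := by ring
      _ < a j * a (j + 2) := by
        gcongr
        linarith [hadd (j + 1) hj]

end LogConcave

section RealRooted

open Polynomial

-- This is Laguerre's inequality at `0`. Its defect, divided by `f ^ 2`, is minus the second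
-- derivative of `log f`, hence additive under products: only linear factors need checking.
theorem two_mul_coeff_zero_mul_coeff_two_le_sq {R : Type*} [CommRing R] [LinearOrder R]
    [IsStrictOrderedRing R] {f : R[X]} (hf : f.Splits) :
    2 * f.coeff 0 * f.coeff 2 ≤ f.coeff 1 ^ 2 := by
  induction hf using Submonoid.closure_induction with
  | mem f hf =>
    obtain ⟨c, rfl⟩ | ⟨c, rfl⟩ := hf <;> simp [coeff_X, coeff_C]
  | one => simp [coeff_one]
  | mul f g _ _ hf hg =>
    have h0 : (f * g).coeff 0 = f.coeff 0 * g.coeff 0 := mul_coeff_zero f g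
    have h1 : (f * g).coeff 1 = f.coeff 0 * g.coeff 1 + f.coeff 1 * g.coeff 0 := mul_coeff_one f g
    have h2 : (f * g).coeff 2 =
        f.coeff 0 * g.coeff 2 + f.coeff 1 * g.coeff 1 + f.coeff 2 * g.coeff 0 := by
      simp [coeff_mul, Finset.Nat.antidiagonal_succ, add_assoc]
    rw [h0, h1, h2]
    linarith [mul_le_mul_of_nonneg_left hf (sq_nonneg (g.coeff 0)),
      mul_le_mul_of_nonneg_left hg (sq_nonneg (f.coeff 0))]

theorem splits_derivative {f : ℝ[X]} (hf : f.Splits) : (derivative f).Splits := by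
  rw [splits_iff_card_roots] at hf ⊢
  have hRolle := card_roots_le_derivative f
  have hcard := card_roots' (derivative f)
  have hdeg := natDegree_derivative_le f
  omega

theorem add_two_mul_coeff_mul_coeff_le_sq {f : ℝ[X]} (hf : f.Splits) (m : ℕ) :
    (m + 2) * (f.coeff m * f.coeff (m + 2)) ≤ (m + 1) * f.coeff (m + 1) ^ 2 := by
  induction m generalizing f with
  | zero => simpa [mul_assoc] using two_mul_coeff_zero_mul_coeff_two_le_sq hf
  | succ m ih =>
    have hderiv := ih (splits_derivative hf)
    simp only [coeff_derivative] at hderiv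
    push_cast at hderiv ⊢
    refine le_of_mul_le_mul_left ?_ (by positivity : (0 : ℝ) < (m + 1) * (m + 2))
    linarith

theorem coeff_mul_coeff_le_sq {f : ℝ[X]} (hf : f.Splits) (m : ℕ) :
    f.coeff m * f.coeff (m + 2) ≤ f.coeff (m + 1) ^ 2 := by
  refine le_of_mul_le_mul_left ?_ (by positivity : (0 : ℝ) < m + 2)
  linarith [add_two_mul_coeff_mul_coeff_le_sq hf m, sq_nonneg (f.coeff (m + 1))]

theorem esymm_mul_esymm_le_sq (s : Multiset ℝ) (j : ℕ) :
    s.esymm j * s.esymm (j + 2) ≤ s.esymm (j + 1) ^ 2 := by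
  rcases le_or_gt (j + 2) s.card with hj | hj
  · have hsplits : (s.map fun r ↦ X + C r).prod.Splits :=
      .multisetProd (by simp +contextual [Splits.X_add_C])
    obtain ⟨m, hm⟩ := Nat.exists_eq_add_of_le hj
    have hcoeff := coeff_mul_coeff_le_sq hsplits m
    rw [s.prod_X_add_C_coeff (by omega), s.prod_X_add_C_coeff (by omega),
      s.prod_X_add_C_coeff (by omega), show s.card - m = j + 2 by omega,
      show s.card - (m + 1) = j + 1 by omega, show s.card - (m + 2) = j by omega] at hcoeff
    rwa [mul_comm]
  · have hzero : s.esymm (j + 2) = 0 := by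
      simp [Multiset.esymm, Multiset.powersetCard_eq_empty _ hj]
    rw [hzero, mul_zero]
    positivity

end RealRooted

section Esymm

variable {R : Type*} [CommSemiring R]

theorem esymm_zero (s : Multiset R) : s.esymm 0 = 1 := by
  simp [Multiset.esymm]

theorem esymm_cons_succ (a : R) (s : Multiset R) (j : ℕ) :
    (a ::ₘ s).esymm (j + 1) = s.esymm (j + 1) + a * s.esymm j := by
  simp [Multiset.esymm, Multiset.powersetCard_cons, Multiset.sum_map_mul_left]

end Esymm

theorem esymmOn_eq_esymm {n : ℕ} (s : Finset (Fin n)) (j : ℕ) (y : Fin n → ℝ) :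
    esymmOn s j y = (s.val.map y).esymm j :=
  (Finset.esymm_map_val y s j).symm

section GardingCone

variable {ι : Type*} {s : Finset ι} {m : ℕ}

/-- The Gårding cone `Γ_m` in the variables indexed by `s`: the vectors whose elementary symmetric
polynomials `σ_0, …, σ_m` in these variables are all positive. The coordinates outside `s` are
unrestricted, so that cones for different sets of variables live in the same space. -/
def gardingCone (s : Finset ι) (m : ℕ) : Set (ι → ℝ) :=
  {y | ∀ j ≤ m, 0 < (s.val.map y).esymm j}

namespace gardingCone

theorem mem_of_forall_pos {y : ι → ℝ} (hm : m ≤ s.card) (hy : ∀ i ∈ s, 0 < y i) :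
    y ∈ gardingCone s m := by
  intro j hj
  rw [Finset.esymm_map_val]
  exact Finset.sum_pos
    (fun t ht ↦ Finset.prod_pos fun i hi ↦ hy i ((Finset.mem_powersetCard.1 ht).1 hi))
    (Finset.powersetCard_nonempty.2 (hj.trans hm))

theorem mem_erase [DecidableEq ι] {y : ι → ℝ} (hy : y ∈ gardingCone s (m + 1)) {i : ι}
    (hi : i ∈ s) : y ∈ gardingCone (s.erase i) m := by
  have hcons : s.val.map y = y i ::ₘ (s.erase i).val.map y := by
    rw [← Multiset.map_cons, Finset.erase_val, Multiset.cons_erase hi]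
  refine forall_pos_of_logConcave_of_add_mul_pos (c := y i) (by simp [esymm_zero])
    (esymm_mul_esymm_le_sq _) fun j hj ↦ ?_
  rw [← esymm_cons_succ, ← hcons]
  exact hy (j + 1) (by omega)

theorem continuous_esymm (s : Finset ι) (j : ℕ) :
    Continuous fun y : ι → ℝ ↦ (s.val.map y).esymm j := by
  simp only [Finset.esymm_map_val]
  fun_prop

theorem isOpen (s : Finset ι) (m : ℕ) : IsOpen (gardingCone s m) := by
  simp only [gardingCone, Set.ofPred_forall]
  exact (Set.finite_Iic m).isOpen_biInter fun j _ ↦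
    isOpen_lt continuous_const (continuous_esymm s j)

theorem mem_of_mem_closure {y : ι → ℝ} (hy : y ∈ closure (gardingCone s m))
    (hm : 0 < (s.val.map y).esymm m) : y ∈ gardingCone s m := by
  have hnonneg (j : ℕ) (hj : j ≤ m) : 0 ≤ (s.val.map y).esymm j :=
    closure_minimal (fun z hz ↦ (hz j hj).le)
      (isClosed_le continuous_const (continuous_esymm s j)) hy
  have hMaclaurin (j : ℕ) (hj : j < m) :
      (s.val.map y).esymm (j + 1) ^ j ≤ (s.val.map y).esymm j ^ (j + 1) :=
    closure_minimal
      (fun z hz ↦ pow_le_pow_succ_of_logConcave (esymm_zero _).ge (esymm_mul_esymm_le_sq _) hz j hj)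
      (isClosed_le ((continuous_esymm s (j + 1)).pow j) ((continuous_esymm s j).pow (j + 1))) hy
  exact forall_pos_of_pow_le_pow_succ hm hnonneg hMaclaurin

theorem subset_of_isPreconnected {t : Set (ι → ℝ)} (ht : IsPreconnected t)
    (hpos : ∀ y ∈ t, 0 < (s.val.map y).esymm m) (hmeet : (t ∩ gardingCone s m).Nonempty) :
    t ⊆ gardingCone s m :=
  ht.subset_of_closure_inter_subset (isOpen s m) hmeet
    fun _ hy ↦ mem_of_mem_closure hy.1 (hpos _ hy.2)

end gardingCone

theorem stmt1_general {X : Type*} [TopologicalSpace X] [PreconnectedSpace X] [DecidableEq ι] {k : ℕ}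
    {y : X → ι → ℝ} (hy : Continuous y) (hpos : ∀ p, 0 < (s.val.map (y p)).esymm (k + 1))
    (hcone : ∃ p₀, y p₀ ∈ gardingCone s (k + 1)) (p : X) :
    y p ∈ gardingCone s (k + 1) ∧ ∀ i ∈ s, y p ∈ gardingCone (s.erase i) k := by
  obtain ⟨p₀, hp₀⟩ := hcone
  have hrange : Set.range y ⊆ gardingCone s (k + 1) :=
    gardingCone.subset_of_isPreconnected (isPreconnected_range hy) (Set.forall_mem_range.2 hpos)
      ⟨y p₀, Set.mem_range_self p₀, hp₀⟩
  have hp : y p ∈ gardingCone s (k + 1) := hrange (Set.mem_range_self p)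
  exact ⟨hp, fun i hi ↦ gardingCone.mem_erase hp hi⟩

end GardingCone

/-- Let `X` be a connected topological space, `n ≥ 3`, `2 ≤ k ≤ n−1`, and let
`y : X → ℝⁿ` be continuous with `σ_{k+1}(y p) > 0` for all `p`, and assume there is a
point `p₀` with all coordinates `y_i(p₀) > 0`. Then for every `p`, every `1 ≤ j ≤ k`
and every `i`, the `j`-th elementary symmetric polynomial of `(y_l(p))_{l ≠ i}` is
positive; in particular `σ_j(y p) > 0` for all `1 ≤ j ≤ k`. -/
theorem stmt1 {X : Type*} [TopologicalSpace X] [ConnectedSpace X] {n k : ℕ}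
    (hn : 3 ≤ n) (hk2 : 2 ≤ k) (hkn : k ≤ n - 1)
    (y : X → (Fin n → ℝ)) (hy : Continuous y)
    (hpos : ∀ p : X, 0 < esymmOn (Finset.univ : Finset (Fin n)) (k + 1) (y p))
    (hell : ∃ p₀ : X, ∀ i : Fin n, 0 < y p₀ i) :
    ∀ p : X, ∀ j : ℕ, 1 ≤ j → j ≤ k →
      (∀ i : Fin n, 0 < esymmOn (Finset.univ.erase i) j (y p)) ∧
      0 < esymmOn (Finset.univ : Finset (Fin n)) j (y p) := by
  intro p j _ hjk
  simp only [esymmOn_eq_esymm] at hpos ⊢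
  have hcard : k + 1 ≤ (Finset.univ : Finset (Fin n)).card := by rw [Finset.card_fin]; omega
  obtain ⟨hσ, hσ_erase⟩ := stmt1_general hy hpos
    (hell.imp fun p₀ h ↦ gardingCone.mem_of_forall_pos hcard fun i _ ↦ h i) p
  exact ⟨fun i ↦ hσ_erase i (Finset.mem_univ i) j hjk, hσ j (by omega)⟩
end

section
/- Let A be a real symmetric n×n matrix with Newton transformations P_k. Then for every 2 ≤ k ≤ n, the identity ∑_{j=0}^{k−1} ( trace(P_j)·A^{k−1−j} − P_j·A^{k−1−j} ) = (n−k)·P_{k−1} holds. -/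
/-- The Newton transformations, defined inductively by `P_0 = I` and
`P_k = binom(n,k)·H_k·I + A·P_{k−1}`. -/
noncomputable def NewtonT (n : ℕ) (κ : Fin n → ℝ) (A : Matrix (Fin n) (Fin n) ℝ) :
    ℕ → Matrix (Fin n) (Fin n) ℝ
  | 0 => 1
  | k + 1 => ((n.choose (k + 1) : ℝ) * Hmc n κ (k + 1)) • (1 : Matrix (Fin n) (Fin n) ℝ)
      + A * NewtonT n κ A k

/-!
Write `N(X) = adj(1 - X A)` and `q(X) = det(1 - X A) = ∑ c_k X^k`. Comparing coefficients in
`(1 - X A) N(X) = q(X) I` gives the recursion of the Newton transformations, so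
`N(X) = ∑ P_k X^k`. Jacobi's formula `q' = -tr(N A)` then says `tr(A P_k) = -(k + 1) c_{k+1}`, hence
`tr P_k = (n - k) c_k`, and the identity follows by induction on `k`. Eigenvalues enter only through
`c_k = (-1)^k σ_k(κ)`.
-/

open Matrix Polynomial

section CommRing

variable {ι R : Type*} [Fintype ι] [DecidableEq ι] [CommRing R]

theorem derivative_det (M : Matrix ι ι R[X]) :
    derivative M.det = (M.adjugate * M.map derivative).trace := by
  have derivative_term (σ : Equiv.Perm ι) : derivative (∏ i, M (σ i) i) =
      ∑ j, ∏ i, M.updateCol j ((M.map derivative).col j) (σ i) i := by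
    rw [derivative_prod_finset]
    refine Finset.sum_congr rfl fun j _ => ?_
    rw [← Finset.prod_erase_mul _ _ (Finset.mem_univ j)]
    congr 1
    · refine Finset.prod_congr rfl fun i hi => ?_
      rw [updateCol_ne (Finset.ne_of_mem_erase hi)]
    · simp only [updateCol_self, col_apply, map_apply]
  calc derivative M.det
      = ∑ j, (M.updateCol j ((M.map derivative).col j)).det := by
        simp only [det_apply, derivative_sum, derivative_smul, derivative_term, Units.smul_def,
          Finset.smul_sum]
        exact Finset.sum_comm
    _ = (M.adjugate * M.map derivative).trace := by
        refine Finset.sum_congr rfl fun j _ => ?_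
        rw [← cramer_apply, cramer_eq_adjugate_mulVec]
        rfl

/-- The Newton transformations of a square matrix over a commutative ring, with
the coefficients of `det(1 - X A)` in the role of `binom(n,k) H_k = (-1)^k σ_k`, so that they can be
read off from the adjugate of `1 - X A`. -/
noncomputable def newtonTransformation (A : Matrix ι ι R) : ℕ → Matrix ι ι R
  | 0 => 1
  | k + 1 => A.charpolyRev.coeff (k + 1) • (1 : Matrix ι ι R) + A * newtonTransformation A k

theorem commute_newtonTransformation (A : Matrix ι ι R) (k : ℕ) :
    Commute A (newtonTransformation A k) := by
  induction k with
  | zero => exact Commute.one_right A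
  | succ k ih =>
    exact ((Commute.one_right A).smul_right _).add_right ((Commute.refl A).mul_right ih)

theorem adjugate_one_sub_X_smul_map_coeff (A : Matrix ι ι R) (k : ℕ) :
    (1 - (X : R[X]) • A.map C).adjugate.map (coeff · k) = newtonTransformation A k := by
  set N := (1 - (X : R[X]) • A.map C).adjugate
  have N_eq : N = A.charpolyRev • (1 : Matrix ι ι R[X]) + (X : R[X]) • (A.map C * N) := by
    have h := mul_adjugate (1 - (X : R[X]) • A.map C)
    rw [sub_mul, one_mul, smul_mul_assoc] at h
    exact sub_eq_iff_eq_add.mp h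
  induction k with
  | zero =>
    ext i j
    rw [N_eq]
    by_cases hij : i = j <;>
      simp [newtonTransformation, coeff_zero_eq_eval_zero, one_apply, hij]
  | succ k ih =>
    rw [newtonTransformation, ← ih]
    ext i j
    conv_lhs => rw [N_eq]
    by_cases hij : i = j <;> simp [mul_apply, hij]

theorem trace_newtonTransformation_mul (A : Matrix ι ι R) (k : ℕ) :
    (newtonTransformation A k * A).trace = -((k + 1) * A.charpolyRev.coeff (k + 1)) := by
  have derivative_entries : (1 - (X : R[X]) • A.map C).map derivative = -A.map C := by
    ext1 i j
    simp [one_apply, apply_ite]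
  have jacobi := congrArg (coeff · k) (derivative_det (1 - (X : R[X]) • A.map C))
  rw [derivative_entries, mul_neg, trace_neg] at jacobi
  rw [← adjugate_one_sub_X_smul_map_coeff]
  simp only [coeff_derivative, coeff_neg] at jacobi
  rw [mul_comm, charpolyRev, jacobi, neg_neg]
  simp [trace, mul_apply]

theorem trace_newtonTransformation (A : Matrix ι ι R) (k : ℕ) :
    (newtonTransformation A k).trace = (Fintype.card ι - k) * A.charpolyRev.coeff k := by
  cases k with
  | zero => simp [newtonTransformation, coeff_zero_eq_eval_zero]
  | succ k =>
    rw [newtonTransformation, trace_add, trace_smul, trace_one,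
      (commute_newtonTransformation A k).eq, trace_newtonTransformation_mul, smul_eq_mul]
    push_cast
    ring

theorem stmt2_general (A : Matrix ι ι R) {k : ℕ} (hk : 0 < k) :
    ∑ j ∈ Finset.range k,
        ((newtonTransformation A j).trace • A ^ (k - 1 - j)
          - newtonTransformation A j * A ^ (k - 1 - j))
      = ((Fintype.card ι : R) - k) • newtonTransformation A (k - 1) := by
  induction k, hk using Nat.le_induction with
  | base => simp [newtonTransformation, sub_smul]
  | succ k hk ih =>
    obtain ⟨m, rfl⟩ : ∃ m, k = m + 1 := Nat.exists_eq_add_of_le' hk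
    simp only [Nat.add_sub_cancel] at ih ⊢
    have shift : ∑ j ∈ Finset.range (m + 1),
        ((newtonTransformation A j).trace • A ^ (m + 1 - j)
          - newtonTransformation A j * A ^ (m + 1 - j))
        = (((Fintype.card ι : R) - (m + 1 : ℕ)) • newtonTransformation A m) * A := by
      rw [← ih, Finset.sum_mul]
      refine Finset.sum_congr rfl fun j hj => ?_
      rw [Nat.sub_add_comm (Finset.mem_range_succ_iff.mp hj), pow_succ, sub_mul, smul_mul_assoc,
        mul_assoc]
    rw [Finset.sum_range_succ, shift, trace_newtonTransformation, newtonTransformation,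
      smul_mul_assoc, ← (commute_newtonTransformation A m).eq, Nat.sub_self, pow_zero, mul_one]
    push_cast
    module

theorem coeff_charpolyRev_of_charpoly_eq_prod {A : Matrix ι ι R} {κ : ι → R}
    (hA : A.charpoly = ∏ i, (X - C (κ i))) (k : ℕ) :
    A.charpolyRev.coeff k = (-1) ^ k * ∑ t ∈ Finset.univ.powersetCard k, ∏ i ∈ t, κ i := by
  have charpolyRev_eq : A.charpolyRev = det (1 + (X : R[X]) • (diagonal (-κ)).map C) := by
    rw [← reverse_charpoly, hA, ← charpoly_diagonal, reverse_charpoly, charpolyRev, sub_eq_add_neg,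
      ← smul_neg, ← Matrix.map_neg C (map_neg C), diagonal_neg]
    rfl
  rw [charpolyRev_eq, coeff_det_one_add_X_smul_eq_sum_minors, Finset.mul_sum]
  refine Finset.sum_congr rfl fun t ht => ?_
  rw [submatrix_diagonal _ _ Subtype.val_injective, det_diagonal,
    ← (Finset.mem_powersetCard.mp ht).2, ← Finset.prod_neg]
  exact Finset.prod_coe_sort t (-κ)

end CommRing

theorem choose_mul_hmc (n : ℕ) (κ : Fin n → ℝ) (k : ℕ) :
    (n.choose k : ℝ) * Hmc n κ k = (-1) ^ k * Ssym n κ k := by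
  -- For `n < k`, `Hmc` divides by `n.choose k = 0`, but then `Ssym n κ k` is an empty sum.
  refine mul_div_cancel_of_imp' fun choose_eq_zero => ?_
  have hnk : n < k := Nat.choose_eq_zero_iff.mp (Nat.cast_eq_zero.mp choose_eq_zero)
  rw [Ssym, Finset.powersetCard_eq_empty.mpr (by simpa using hnk), Finset.sum_empty, mul_zero]

theorem newtonT_eq_newtonTransformation {n : ℕ} {A : Matrix (Fin n) (Fin n) ℝ} {κ : Fin n → ℝ}
    (hA : A.charpoly = ∏ i, (X - C (κ i))) (k : ℕ) :
    NewtonT n κ A k = newtonTransformation A k := by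
  induction k with
  | zero => rfl
  | succ k ih =>
    rw [NewtonT, newtonTransformation, ih, choose_mul_hmc, coeff_charpolyRev_of_charpoly_eq_prod hA,
      Ssym]

/-- For a real symmetric `n×n` matrix `A` with eigenvalues `κ₁,…,κₙ` listed with
multiplicity, for every `2 ≤ k ≤ n` one has
`∑_{j=0}^{k−1} ( trace(P_j)·A^{k−1−j} − P_j·A^{k−1−j} ) = (n−k)·P_{k−1}`. -/
theorem stmt2 {n : ℕ} (A : Matrix (Fin n) (Fin n) ℝ) (hA : A.IsSymm)
    (κ : Fin n → ℝ)
    (hchar : A.charpoly = ∏ i, (Polynomial.X - Polynomial.C (κ i)))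
    (k : ℕ) (hk2 : 2 ≤ k) (hkn : k ≤ n) :
    ∑ j ∈ Finset.range k,
        ((NewtonT n κ A j).trace • A ^ (k - 1 - j) - NewtonT n κ A j * A ^ (k - 1 - j))
      = (((n : ℝ) - (k : ℝ))) • NewtonT n κ A (k - 1) := by
  simpa only [newtonT_eq_newtonTransformation hchar, Fintype.card_fin] using
    stmt2_general A (by omega : 0 < k)
end

section
/- Let n ≥ 3 and let y = (y₁,…,yₙ) ∈ ℝⁿ satisfy p_1(y) > 0 and p_2(y) > 0. Then p_1(y)·p_2(y) − p_3(y) ≥ (p_2(y)/p_1(y))·(p_1(y)² − p_2(y)) ≥ 0, and p_1(y)·p_2(y) = p_3(y) if and only if y₁ = y₂ = ⋯ = yₙ. -/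
/-- The normalized `j`-th elementary symmetric function
`p_j(y) = σ_j(y)/binom(n,j)` of `y = (y₁,…,yₙ) ∈ ℝⁿ` (with `p_0 = 1`, and
`p_j(y) = 0` for `j > n`). -/
noncomputable def pF (n : ℕ) (y : Fin n → ℝ) (j : ℕ) : ℝ :=
  (∑ t ∈ (Finset.univ : Finset (Fin n)).powersetCard j, ∏ i ∈ t, y i) / (n.choose j : ℝ)

/-!
Newton's inequality `pⱼ pⱼ₊₂ ≤ pⱼ₊₁²` holds because `∏ᵢ (1 + yᵢ X) = ∑ⱼ (n choose j) pⱼ Xʲ` has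
only real roots. By Rolle's theorem differentiation preserves real-rootedness, and up to a constant
factor it shifts the sequence `p` by one; reversing the coefficients before and after
differentiating drops the last term of `p` instead. Repeating both operations leaves the
real-rooted polynomial `pⱼ + 2 pⱼ₊₁ X + pⱼ₊₂ X²`, whose discriminant is nonnegative.

Dividing `p₁ p₃ ≤ p₂²` by `p₁ > 0` gives the lower bound for `p₁ p₂ - p₃`. If `p₁ p₂ = p₃`, that
bound forces `p₁² = p₂`, that is, the variance of the `yᵢ` vanishes.
-/

open Finset Polynomial

section Splits

variable {K : Type*} [Field K] {p : K[X]}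

lemma splits_reverse (hp : p.Splits) : p.reverse.Splits := by
  induction hp using Submonoid.closure_induction with
  | mem q hq =>
    refine Splits.of_natDegree_le_one ((reverse_natDegree_le q).trans ?_)
    rcases hq with ⟨a, rfl⟩ | ⟨a, rfl⟩ <;> simp
  | one =>
    rw [← C_1, reverse_C]
    exact Splits.C 1
  | mul q r _ _ hq hr => exact reverse_mul_of_domain q r ▸ hq.mul hr

lemma splits_reflect (hp : p.Splits) {N : ℕ} (hN : p.natDegree ≤ N) : (p.reflect N).Splits := by
  have hfactor : p.reflect N = p.reverse * X ^ (N - p.natDegree) := by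
    simpa [Nat.add_sub_cancel' hN, reverse, reflect_one] using
      reflect_mul p 1 le_rfl (natDegree_one.le.trans (Nat.zero_le (N - p.natDegree)))
  exact hfactor ▸ (splits_reverse hp).mul (Splits.X_pow _)

lemma splits_derivative_s12 {p : ℝ[X]} (hp : p.Splits) : (derivative p).Splits := by
  have hroots := card_roots_le_derivative p
  have hdegree := natDegree_derivative_le p
  have hcard := card_roots' (derivative p)
  rw [splits_iff_card_roots] at hp ⊢
  omega

end Splits

/-- The Jensen polynomial `∑ i ≤ n, (n choose i) aᵢ Xⁱ` of a sequence `a`. Only the terms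
`a₀, …, aₙ` matter, and the binomial weights make differentiation act as a shift of `a`; this is how
real-rootedness is passed on to shorter stretches of the sequence. -/
noncomputable def jensenPolynomial {R : Type*} [CommSemiring R] (a : ℕ → R) (n : ℕ) : R[X] :=
  ∑ i ∈ range (n + 1), monomial i (n.choose i * a i)

namespace jensenPolynomial

section CommSemiring

variable {R : Type*} [CommSemiring R] (a : ℕ → R) (n : ℕ)

lemma coeff_eq (i : ℕ) : (jensenPolynomial a n).coeff i = n.choose i * a i := by
  by_cases hi : i ≤ n
  · simp [jensenPolynomial, coeff_monomial, hi]
  · simp [jensenPolynomial, coeff_monomial, hi, Nat.choose_eq_zero_of_lt (not_le.mp hi)]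

lemma natDegree_le : (jensenPolynomial a n).natDegree ≤ n :=
  natDegree_le_iff_coeff_eq_zero.mpr fun i hi ↦ by simp [coeff_eq, Nat.choose_eq_zero_of_lt hi]

lemma derivative_succ :
    derivative (jensenPolynomial a (n + 1)) =
      C (n + 1 : R) * jensenPolynomial (fun i ↦ a (i + 1)) n := by
  ext i
  have hchoose := congrArg (Nat.cast (R := R)) (Nat.add_one_mul_choose_eq n i)
  push_cast at hchoose
  rw [coeff_derivative, coeff_C_mul, coeff_eq, coeff_eq, ← mul_assoc, hchoose]
  ring

lemma reflect_eq :
    (jensenPolynomial a n).reflect n = jensenPolynomial (fun i ↦ a (n - i)) n := by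
  ext i
  rw [coeff_reflect, coeff_eq, coeff_eq]
  rcases le_or_gt i n with hi | hi
  · rw [revAt_le hi, Nat.choose_symm hi]
  · simp [revAt_eq_self_of_lt hi, Nat.choose_eq_zero_of_lt hi]

end CommSemiring

section Real

variable {a : ℕ → ℝ} {m n : ℕ}

lemma splits_shift (h : (jensenPolynomial a (n + 1)).Splits) :
    (jensenPolynomial (fun i ↦ a (i + 1)) n).Splits := by
  have hderiv := splits_derivative_s12 h
  rw [derivative_succ] at hderiv
  exact (splits_mul_iff_right (C_ne_zero.mpr (by positivity)) (Splits.C _)).mp hderiv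

lemma splits_of_succ (h : (jensenPolynomial a (n + 1)).Splits) : (jensenPolynomial a n).Splits := by
  have hreflect := splits_reflect h (natDegree_le a (n + 1))
  rw [reflect_eq] at hreflect
  have hshift := splits_shift hreflect
  simp only [Nat.add_sub_add_right] at hshift
  rw [← reflect_eq] at hshift
  have hdegree := natDegree_reflect_le.trans (max_le le_rfl (natDegree_le a n))
  have hback := splits_reflect hshift hdegree
  rwa [reflect_reflect] at hback

lemma splits_of_le (hmn : m ≤ n) (h : (jensenPolynomial a n).Splits) :
    (jensenPolynomial a m).Splits :=
  Nat.decreasingInduction (fun _ _ ↦ splits_of_succ) h hmn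

lemma splits_shift_iterate (k : ℕ) (h : (jensenPolynomial a (n + k)).Splits) :
    (jensenPolynomial (fun i ↦ a (i + k)) n).Splits := by
  induction k generalizing a with
  | zero => exact h
  | succ k ih => exact ih (splits_shift h)

lemma mul_le_sq_of_splits_two (h : (jensenPolynomial a 2).Splits) : a 0 * a 2 ≤ a 1 ^ 2 := by
  by_cases ha : a 2 = 0
  · simpa [ha] using sq_nonneg (a 1)
  have hdegree : (jensenPolynomial a 2).degree ≠ 0 := by
    intro h0
    have hcoeff : (jensenPolynomial a 2).coeff 2 = 0 :=
      coeff_eq_zero_of_degree_lt (h0 ▸ by norm_num)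
    simp [coeff_eq, ha] at hcoeff
  obtain ⟨x, hx⟩ := h.exists_eval_eq_zero hdegree
  have hroot : a 0 + 2 * a 1 * x + a 2 * x ^ 2 = 0 := by
    simpa [jensenPolynomial, sum_range_succ] using hx
  have hsquare : a 1 ^ 2 - a 0 * a 2 = (a 2 * x + a 1) ^ 2 := by
    linear_combination (-a 2) * hroot
  exact sub_nonneg.mp (hsquare ▸ sq_nonneg _)

theorem mul_le_sq_of_splits (h : (jensenPolynomial a n).Splits) {j : ℕ} (hj : j + 2 ≤ n) :
    a j * a (j + 2) ≤ a (j + 1) ^ 2 := by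
  have hwindow := splits_shift_iterate j (splits_of_le (by omega : 2 + j ≤ n) h)
  simpa [add_comm] using mul_le_sq_of_splits_two hwindow

end Real

end jensenPolynomial

lemma sum_sq_add_two_mul_sum_powersetCard_two {R ι : Type*} [CommRing R] [Fintype ι]
    (f : ι → R) :
    ∑ i, f i ^ 2 + 2 * ∑ t ∈ univ.powersetCard 2, ∏ i ∈ t, f i = (∑ i, f i) ^ 2 := by
  have hpairs : {a ∈ antidiagonal 2 | a.1 < 2} = {((0, 2) : ℕ × ℕ), (1, 1)} := by decide
  have hnewton := congrArg (MvPolynomial.aeval f) (MvPolynomial.mul_esymm_eq_sum ι R 2)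
  rw [hpairs, sum_pair (by decide)] at hnewton
  simp only [MvPolynomial.esymm, MvPolynomial.psum, powersetCard_zero, powersetCard_one, sum_map,
    sum_singleton, prod_empty, prod_singleton, Function.Embedding.coeFn_mk, map_mul, map_add,
    map_sum, map_prod, map_pow, map_neg, map_one, map_ofNat, MvPolynomial.aeval_X,
    Nat.cast_ofNat, pow_zero, pow_one] at hnewton
  linear_combination hnewton

section NormalizedSymmetricFunctions

variable (n : ℕ) (y : Fin n → ℝ)

lemma choose_mul_pF (j : ℕ) :
    n.choose j * pF n y j = ∑ t ∈ univ.powersetCard j, ∏ i ∈ t, y i := by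
  rcases le_or_gt j n with hj | hj
  · exact mul_div_cancel₀ _ (Nat.cast_ne_zero.mpr (Nat.choose_pos hj).ne')
  · simp [Nat.choose_eq_zero_of_lt hj, powersetCard_eq_empty.mpr (card_fin n ▸ hj)]

lemma pF_zero : pF n y 0 = 1 := by simp [pF]

lemma jensenPolynomial_pF : jensenPolynomial (pF n y) n = ∏ i, (1 + C (y i) * X) := by
  simp_rw [prod_one_add, sum_powerset, card_fin, jensenPolynomial, choose_mul_pF]
  refine sum_congr rfl fun j _ ↦ ?_
  rw [map_sum]
  refine sum_congr rfl fun t ht ↦ ?_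
  rw [prod_mul_distrib, prod_const, (mem_powersetCard.mp ht).2, ← map_prod, C_mul_X_pow_eq_monomial]

theorem pF_mul_pF_add_two_le_sq (j : ℕ) : pF n y j * pF n y (j + 2) ≤ pF n y (j + 1) ^ 2 := by
  rcases le_or_gt (j + 2) n with hj | hj
  · refine jensenPolynomial.mul_le_sq_of_splits ?_ hj
    rw [jensenPolynomial_pF]
    exact Splits.prod fun i _ ↦ Splits.of_natDegree_le_one (by compute_degree)
  · have hvanish : pF n y (j + 2) = 0 := by simp [pF, Nat.choose_eq_zero_of_lt hj]
    simpa [hvanish] using sq_nonneg (pF n y (j + 1))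

lemma pF_two_le_sq : pF n y 2 ≤ pF n y 1 ^ 2 := by
  simpa [pF_zero] using pF_mul_pF_add_two_le_sq n y 0

lemma sum_sub_pF_one_sq :
    ∑ i, (y i - pF n y 1) ^ 2 = n * (n - 1) * (pF n y 1 ^ 2 - pF n y 2) := by
  have hsum : ∑ i, y i = n * pF n y 1 := by
    simpa [powersetCard_one] using (choose_mul_pF n y 1).symm
  have hsq := sum_sq_add_two_mul_sum_powersetCard_two y
  rw [← choose_mul_pF, Nat.cast_choose_two, hsum] at hsq
  calc ∑ i, (y i - pF n y 1) ^ 2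
      = ∑ i, y i ^ 2 - 2 * pF n y 1 * ∑ i, y i + n * pF n y 1 ^ 2 := by
        simp only [sub_sq, mul_right_comm, sum_add_distrib, sum_sub_distrib, mul_sum, sum_const,
          card_fin, nsmul_eq_mul]
    _ = n * (n - 1) * (pF n y 1 ^ 2 - pF n y 2) := by
        rw [hsum]
        linear_combination hsq

variable {n y}

lemma pF_const {j : ℕ} (hj : j ≤ n) (c : ℝ) : pF n (fun _ ↦ c) j = c ^ j := by
  have hchoose : (n.choose j : ℝ) ≠ 0 := Nat.cast_ne_zero.mpr (Nat.choose_pos hj).ne'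
  refine mul_left_cancel₀ hchoose ?_
  rw [choose_mul_pF, sum_congr rfl fun t ht ↦ by rw [prod_const, (mem_powersetCard.mp ht).2]]
  simp

lemma eq_pF_one_of_pF_one_sq_eq_pF_two (h : pF n y 1 ^ 2 = pF n y 2) (i : Fin n) :
    y i = pF n y 1 := by
  have hsum : ∑ i, (y i - pF n y 1) ^ 2 = 0 := by rw [sum_sub_pF_one_sq, h, sub_self, mul_zero]
  have hsq := (sum_eq_zero_iff_of_nonneg fun i _ ↦ sq_nonneg _).mp hsum i (mem_univ i)
  exact sub_eq_zero.mp (sq_eq_zero_iff.mp hsq)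

end NormalizedSymmetricFunctions

/-- Let `n ≥ 3` and `y ∈ ℝⁿ` with `p_1(y) > 0` and `p_2(y) > 0`. Then
`p_1·p_2 − p_3 ≥ (p_2/p_1)·(p_1² − p_2) ≥ 0`, and `p_1·p_2 = p_3` iff `y₁ = ⋯ = yₙ`. -/
theorem stmt12 {n : ℕ} (hn : 3 ≤ n) (y : Fin n → ℝ)
    (h1 : 0 < pF n y 1) (h2 : 0 < pF n y 2) :
    (pF n y 2 / pF n y 1) * (pF n y 1 ^ 2 - pF n y 2) ≤ pF n y 1 * pF n y 2 - pF n y 3 ∧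
    0 ≤ (pF n y 2 / pF n y 1) * (pF n y 1 ^ 2 - pF n y 2) ∧
    (pF n y 1 * pF n y 2 = pF n y 3 ↔ ∀ i i' : Fin n, y i = y i') := by
  have newton : pF n y 1 * pF n y 3 ≤ pF n y 2 ^ 2 := pF_mul_pF_add_two_le_sq n y 1
  have ratio_pos : 0 < pF n y 2 / pF n y 1 := div_pos h2 h1
  have lower_bound : (pF n y 2 / pF n y 1) * (pF n y 1 ^ 2 - pF n y 2) ≤
      pF n y 1 * pF n y 2 - pF n y 3 :=
    calc (pF n y 2 / pF n y 1) * (pF n y 1 ^ 2 - pF n y 2)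
        = pF n y 1 * pF n y 2 - pF n y 2 ^ 2 / pF n y 1 := by field_simp
      _ ≤ pF n y 1 * pF n y 2 - pF n y 3 := sub_le_sub_left ((le_div_iff₀' h1).mpr newton) _
  have gap_nonneg : 0 ≤ pF n y 1 ^ 2 - pF n y 2 := sub_nonneg.mpr (pF_two_le_sq n y)
  refine ⟨lower_bound, mul_nonneg ratio_pos.le gap_nonneg, fun h ↦ ?_, fun h ↦ ?_⟩
  · rw [h, sub_self] at lower_bound
    have gap_nonpos := nonpos_of_mul_nonpos_right lower_bound ratio_pos
    have hy := eq_pF_one_of_pF_one_sq_eq_pF_two (sub_eq_zero.mp (gap_nonpos.antisymm gap_nonneg))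
    exact fun i i' ↦ (hy i).trans (hy i').symm
  · obtain ⟨c, rfl⟩ : ∃ c, y = fun _ ↦ c := ⟨y ⟨0, by omega⟩, funext fun i ↦ h i _⟩
    rw [pF_const (by omega), pF_const (by omega), pF_const hn]
    ring
end
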